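/- (Variance of OffCEM.) Assume cluster common support (for all x, c: π(c|x) > 0 implies π₀(c|x) > 0) and local correctness (for all x and all a, b with φ(x,a) = φ(x,b): q(x,a) − q(x,b) = f̂(x,a) − f̂(x,b)). Let Y(x,a,r) := w(x, φ(x,a)) · (ρ(r) − f̂(x,a)) + f̂(x,π), a real random variable under the joint distribution μ(x,a,r) := p(x)·π₀(a|x)·p(r|x,a). Then Var_μ[Y] = Σ_x p(x) Σ_a π₀(a|x) · w(x, φ(x,a))² · σ²(x,a) + Σ_x p(x) · Var_{π₀(·|x)}[ a ↦ w(x, φ(x,a)) · (q(x,a) − f̂(x,a)) ] + Var_p[ x ↦ Σ_a π(a|x) q(x,a) ]. -/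

import Mathlib

open Finset

/-- The probability that a policy `pol` on a finite action set puts on the
cluster `c` under the clustering `φ` (for a fixed context). -/
noncomputable def clusterProb {A C : Type*} [Fintype A] [DecidableEq C]
    (pol : A → ℝ) (φ : A → C) (c : C) : ℝ :=
  ∑ a ∈ univ.filter (fun a => φ a = c), pol a

/-- The cluster importance weight `w(x,c) = π(c|x) / π₀(c|x)` (for a fixed
context), with the convention `t / 0 = 0`. -/
noncomputable def clusterWeight {A C : Type*} [Fintype A] [DecidableEq C]
    (π₀ π : A → ℝ) (φ : A → C) (c : C) : ℝ :=
  clusterProb π φ c / clusterProb π₀ φ c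

/-- Variance of a real-valued function `Z` under a distribution `ν` on a
finite type: `Var_ν[Z] = ∑ ω, ν ω * (Z ω - ∑ ω', ν ω' * Z ω')²`. -/
noncomputable def distVar {Ω : Type*} [Fintype Ω] (ν Z : Ω → ℝ) : ℝ :=
  ∑ ω, ν ω * (Z ω - ∑ ω', ν ω' * Z ω') ^ 2

/-!
Conditioning on the context and then on the action, the law of total variance splits the variance
into three layers. Given `(x, a)`, the estimator is affine in the reward, and its mean is the
weighted residual `w * (q - fhat)` plus a function of `x`. Local correctness makes `q - fhat` depend
only on the cluster, so reweighting by cluster turns its `π₀`-mean into its `π`-mean; hence the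
mean given `x` is `∑ a, π x a * q x a`, which produces the last term.
-/

section Moments

variable {Ω : Type*} [Fintype Ω] {ν : Ω → ℝ}

theorem sum_mul_add_const (hν : ∑ ω, ν ω = 1) (Z : Ω → ℝ) (k : ℝ) :
    ∑ ω, ν ω * (Z ω + k) = ∑ ω, ν ω * Z ω + k := by
  simp only [mul_add, sum_add_distrib, ← sum_mul, hν, one_mul]

theorem sum_mul_const_mul_sub_add_const (hν : ∑ ω, ν ω = 1) (Z : Ω → ℝ) (c m k : ℝ) :
    ∑ ω, ν ω * (c * (Z ω - m) + k) = c * (∑ ω, ν ω * Z ω - m) + k := by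
  simp only [sum_mul_add_const hν, sub_eq_add_neg, mul_left_comm _ c, ← mul_sum]

theorem distVar_add_const (hν : ∑ ω, ν ω = 1) (Z : Ω → ℝ) (k : ℝ) :
    distVar ν (fun ω => Z ω + k) = distVar ν Z := by
  simp only [distVar, sum_mul_add_const hν, add_sub_add_right_eq_sub]

theorem distVar_const_mul (ν : Ω → ℝ) (c : ℝ) (Z : Ω → ℝ) :
    distVar ν (fun ω => c * Z ω) = c ^ 2 * distVar ν Z := by
  simp only [distVar, mul_left_comm _ c, ← mul_sum, ← mul_sub, mul_pow, mul_left_comm _ (c ^ 2)]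

theorem distVar_const_mul_sub_add_const (hν : ∑ ω, ν ω = 1) (Z : Ω → ℝ) (c m k : ℝ) :
    distVar ν (fun ω => c * (Z ω - m) + k) = c ^ 2 * distVar ν Z := by
  simp only [sub_eq_add_neg, distVar_add_const hν, distVar_const_mul]

theorem sum_mul_sub_sq_eq_distVar_add (hν : ∑ ω, ν ω = 1) (Z : Ω → ℝ) (m : ℝ) :
    ∑ ω, ν ω * (Z ω - m) ^ 2 = distVar ν Z + (∑ ω, ν ω * Z ω - m) ^ 2 := by
  unfold distVar
  set μ := ∑ ω, ν ω * Z ω with hμ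
  have expand (ω : Ω) : ν ω * (Z ω - m) ^ 2
      = ν ω * (Z ω - μ) ^ 2 + (2 * (μ - m) * (ν ω * Z ω) + (m ^ 2 - μ ^ 2) * ν ω) := by ring
  simp only [expand, sum_add_distrib, ← mul_sum, hν, ← hμ]
  ring

end Moments

section TotalVariance

variable {α β γ : Type*} [Fintype α] [Fintype β] [Fintype γ]

theorem distVar_prod (p : α → ℝ) {k : α → β → ℝ} (hk : ∀ x, ∑ y, k x y = 1) (Z : α → β → ℝ) :
    distVar (fun z : α × β => p z.1 * k z.1 z.2) (fun z => Z z.1 z.2)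
      = ∑ x, p x * distVar (k x) (Z x) + distVar p (fun x => ∑ y, k x y * Z x y) := by
  rw [distVar, distVar]
  simp only [Fintype.sum_prod_type, mul_assoc, ← mul_sum, sum_mul_sub_sq_eq_distVar_add (hk _),
    mul_add, sum_add_distrib]

theorem distVar_prod_prod (p : α → ℝ) {k : α → β → ℝ} {l : α → β → γ → ℝ}
    (hk : ∀ x, ∑ y, k x y = 1) (hl : ∀ x y, ∑ t, l x y t = 1) (Z : α → β → γ → ℝ) :
    distVar (fun z : α × β × γ => p z.1 * k z.1 z.2.1 * l z.1 z.2.1 z.2.2)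
        (fun z => Z z.1 z.2.1 z.2.2)
      = (∑ x, p x * ∑ y, k x y * distVar (l x y) (Z x y))
        + (∑ x, p x * distVar (k x) (fun y => ∑ t, l x y t * Z x y t))
        + distVar p (fun x => ∑ y, k x y * ∑ t, l x y t * Z x y t) := by
  have hkl (x : α) : ∑ z : β × γ, k x z.1 * l x z.1 z.2 = 1 := by
    simp only [Fintype.sum_prod_type, ← mul_sum, hl, mul_one, hk]
  have condition_fst := distVar_prod p hkl (fun x z => Z x z.1 z.2)
  simp only [distVar_prod (k _) (hl _) (Z _), Fintype.sum_prod_type, mul_assoc, ← mul_sum,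
    mul_add, sum_add_distrib] at condition_fst
  simpa only [mul_assoc] using condition_fst

end TotalVariance

section Clusters

variable {A C : Type*} [Fintype A] [DecidableEq C]

theorem clusterProb_nonneg {pol : A → ℝ} (hpol : ∀ a, 0 ≤ pol a) (φ : A → C) (c : C) :
    0 ≤ clusterProb pol φ c :=
  sum_nonneg fun a _ => hpol a

theorem sum_mul_comp_eq_sum_clusterProb_mul (pol : A → ℝ) (φ : A → C) (g : C → ℝ) :
    ∑ a, pol a * g (φ a) = ∑ c ∈ univ.image φ, clusterProb pol φ c * g c := by
  rw [← sum_fiberwise_of_maps_to (fun a _ => mem_image_of_mem φ (mem_univ a))]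
  refine sum_congr rfl fun c _ => ?_
  rw [clusterProb, sum_mul]
  exact sum_congr rfl fun a ha => by rw [(mem_filter.mp ha).2]

theorem clusterProb_mul_clusterWeight {π₀ π : A → ℝ} (hπ : ∀ a, 0 ≤ π a) {φ : A → C} {c : C}
    (hsupp : 0 < clusterProb π φ c → 0 < clusterProb π₀ φ c) :
    clusterProb π₀ φ c * clusterWeight π₀ π φ c = clusterProb π φ c :=
  mul_div_cancel_of_imp' fun h₀ =>
    ((clusterProb_nonneg hπ φ c).eq_of_not_lt fun h => (hsupp h).ne' h₀).symm

variable {π₀ π : A → ℝ} {φ : A → C} {w : C → ℝ}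

theorem sum_reweighted_eq_of_factorsThrough (hw : ∀ c, clusterProb π₀ φ c * w c = clusterProb π φ c)
    {d : A → ℝ} (hd : d.FactorsThrough φ) :
    ∑ a, π₀ a * (w (φ a) * d a) = ∑ a, π a * d a := by
  obtain ⟨g, rfl⟩ := (Function.factorsThrough_iff d).mp hd
  calc ∑ a, π₀ a * (w (φ a) * g (φ a))
      = ∑ c ∈ univ.image φ, clusterProb π₀ φ c * (w c * g c) :=
        sum_mul_comp_eq_sum_clusterProb_mul π₀ φ fun c => w c * g c
    _ = ∑ c ∈ univ.image φ, clusterProb π φ c * g c := by simp only [← mul_assoc, hw]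
    _ = ∑ a, π a * g (φ a) := (sum_mul_comp_eq_sum_clusterProb_mul π φ g).symm

theorem sum_reweighted_residual_add_eq (hπ₀sum : ∑ a, π₀ a = 1)
    (hw : ∀ c, clusterProb π₀ φ c * w c = clusterProb π φ c) {q fhat : A → ℝ}
    (hlc : ∀ a b, φ a = φ b → q a - q b = fhat a - fhat b) :
    ∑ a, π₀ a * (w (φ a) * (q a - fhat a) + ∑ a', π a' * fhat a') = ∑ a, π a * q a := by
  have residual_factors : (fun a => q a - fhat a).FactorsThrough φ :=
    fun a b hab => sub_eq_sub_iff_sub_eq_sub.mp (hlc a b hab)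
  rw [sum_mul_add_const hπ₀sum, sum_reweighted_eq_of_factorsThrough hw residual_factors]
  simp only [mul_sub, sum_sub_distrib, sub_add_cancel]

end Clusters

/-- `hw` expresses `w(x,c) = π(c|x) / π₀(c|x)` without division, so `w x c` is arbitrary where both
masses vanish. -/
theorem offcem_variance_general
    {X A C R : Type*} [Fintype X] [Fintype A] [Fintype R] [DecidableEq C]
    (p : X → ℝ) (π₀ π : X → A → ℝ) (hπ₀sum : ∀ x, ∑ a, π₀ x a = 1)
    (φ : X → A → C) (w : X → C → ℝ)
    (hw : ∀ x c, clusterProb (π₀ x) (φ x) c * w x c = clusterProb (π x) (φ x) c)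
    (q fhat : X → A → ℝ) (ρ : R → ℝ) (pr : X → A → R → ℝ)
    (hprsum : ∀ x a, ∑ r, pr x a r = 1)
    (hmean : ∀ x a, ∑ r, pr x a r * ρ r = q x a)
    (hlc : ∀ x a b, φ x a = φ x b → q x a - q x b = fhat x a - fhat x b) :
    distVar (fun z : X × A × R => p z.1 * π₀ z.1 z.2.1 * pr z.1 z.2.1 z.2.2)
        (fun z : X × A × R =>
          w z.1 (φ z.1 z.2.1) * (ρ z.2.2 - fhat z.1 z.2.1) + ∑ a', π z.1 a' * fhat z.1 a')
      = (∑ x, p x * ∑ a, π₀ x a * w x (φ x a) ^ 2 * (∑ r, pr x a r * (ρ r - q x a) ^ 2))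
        + (∑ x, p x * distVar (π₀ x) (fun a => w x (φ x a) * (q x a - fhat x a)))
        + distVar p (fun x => ∑ a, π x a * q x a) := by
  have reward_variance (x : X) (a : A) :
      distVar (pr x a) ρ = ∑ r, pr x a r * (ρ r - q x a) ^ 2 := by
    rw [distVar, hmean]
  rw [distVar_prod_prod p hπ₀sum hprsum fun x a r =>
    w x (φ x a) * (ρ r - fhat x a) + ∑ a', π x a' * fhat x a']
  simp only [distVar_const_mul_sub_add_const (hprsum _ _), reward_variance,
    sum_mul_const_mul_sub_add_const (hprsum _ _), hmean, distVar_add_const (hπ₀sum _),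
    sum_reweighted_residual_add_eq (hπ₀sum _) (hw _) (hlc _), mul_assoc]

/-- Variance of the OffCEM estimator (Proposition 3.4): under cluster common
support and local correctness, the variance of the per-sample OffCEM random
variable decomposes into the three stated terms. -/
theorem offcem_variance
    {X A C R : Type*} [Fintype X] [Fintype A] [Fintype C] [Fintype R]
    [Nonempty X] [Nonempty A] [Nonempty C] [Nonempty R] [DecidableEq C]
    (p : X → ℝ) (hp : ∀ x, 0 ≤ p x) (hpsum : ∑ x, p x = 1)
    (π₀ π : X → A → ℝ)
    (hπ₀ : ∀ x a, 0 ≤ π₀ x a) (hπ₀sum : ∀ x, ∑ a, π₀ x a = 1)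
    (hπ : ∀ x a, 0 ≤ π x a) (hπsum : ∀ x, ∑ a, π x a = 1)
    (φ : X → A → C)
    (q fhat : X → A → ℝ)
    (ρ : R → ℝ) (pr : X → A → R → ℝ)
    (hpr : ∀ x a r, 0 ≤ pr x a r) (hprsum : ∀ x a, ∑ r, pr x a r = 1)
    (hmean : ∀ x a, ∑ r, pr x a r * ρ r = q x a)
    (hsupp : ∀ x (c : C),
      0 < clusterProb (π x) (φ x) c → 0 < clusterProb (π₀ x) (φ x) c)
    (hlc : ∀ x a b, φ x a = φ x b → q x a - q x b = fhat x a - fhat x b) :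
    distVar (fun z : X × A × R => p z.1 * π₀ z.1 z.2.1 * pr z.1 z.2.1 z.2.2)
        (fun z : X × A × R =>
          clusterWeight (π₀ z.1) (π z.1) (φ z.1) (φ z.1 z.2.1)
              * (ρ z.2.2 - fhat z.1 z.2.1)
            + ∑ a', π z.1 a' * fhat z.1 a')
      = (∑ x, p x * ∑ a, π₀ x a *
            clusterWeight (π₀ x) (π x) (φ x) (φ x a) ^ 2 *
            (∑ r, pr x a r * (ρ r - q x a) ^ 2))
        + (∑ x, p x * distVar (π₀ x)
            (fun a => clusterWeight (π₀ x) (π x) (φ x) (φ x a) * (q x a - fhat x a)))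
        + distVar p (fun x => ∑ a, π x a * q x a) := by
  exact offcem_variance_general p π₀ π hπ₀sum φ (fun x => clusterWeight (π₀ x) (π x) (φ x))
    (fun x c => clusterProb_mul_clusterWeight (hπ x) (hsupp x c)) q fhat ρ pr hprsum hmean hlc
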